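/- Let T ⊆ W^{<ℕ}, let α be a countable ordinal, and let X, Y ⊆ W be block subspaces with Y ⊆* X, i.e. all but finitely many terms of the block sequence spanning Y lie in X. Then: (1) if player II has a strategy in the Gowers game G^α_X to play in T, then II has a strategy in G^α_Y to play in T; and (2) if player I has a strategy in the asymptotic game F^α_X to play in T, then I has a strategy in F^α_Y to play in T. -/

import Mathlib

open Filter Topology

namespace Rosendal

variable {𝒲 : Type} [NormedAddCommGroup 𝒲] [NormedSpace ℝ 𝒲]

/-- `(e n)` is a Schauder basis of the Banach space `𝒲`. -/
def IsSchauderBasis (e : ℕ → 𝒲) : Prop :=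
  ∀ x : 𝒲, ∃! a : ℕ → ℝ,
    Tendsto (fun N => ∑ i ∈ Finset.range N, a i • e i) atTop (𝓝 x)

/-- `x` is a linear combination of the vectors `b i`, `i ∈ s`. -/
def SuppIn (b : ℕ → 𝒲) (x : 𝒲) (s : Finset ℕ) : Prop :=
  ∃ a : ℕ → ℝ, x = ∑ i ∈ s, a i • b i

/-- `(x i)_{i<k} ∼_K (y i)_{i<k}`. -/
def SeqEquiv (K : ℝ) (k : ℕ) (x y : ℕ → 𝒲) : Prop :=
  ∀ a : ℕ → ℝ,
    (1 / K) * ‖∑ i ∈ Finset.range k, a i • x i‖ ≤ ‖∑ i ∈ Finset.range k, a i • y i‖ ∧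
    ‖∑ i ∈ Finset.range k, a i • y i‖ ≤ K * ‖∑ i ∈ Finset.range k, a i • x i‖

/-- The outcome `l = (x 0, …, x k)` satisfies `(x 0, …, x k) ∼_K (y 0, …, y k)`. -/
def OutcomeEquiv (K : ℝ) (l : List 𝒲) (y : ℕ → 𝒲) : Prop :=
  SeqEquiv K l.length (fun i => l.getD i 0) y

/-- The outcome `l = (u 0, v 0, u 1, v 1, …, u k, v k)` satisfies
`(u 0, …, u k) ∼_K (v 0, …, v k)`. -/
def PairOutcomeEquiv (K : ℝ) (l : List 𝒲) : Prop :=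
  SeqEquiv K (l.length / 2) (fun i => l.getD (2 * i) 0) (fun i => l.getD (2 * i + 1) 0)

/-- The tree `T((x n), Y, K)`. -/
def embTree (x : ℕ → 𝒲) (Y : Set 𝒲) (K : ℝ) : Set (List 𝒲) :=
  {l | (∀ v ∈ l, v ∈ Y) ∧ SeqEquiv K l.length (fun i => l.getD i 0) x}

open Classical in
/-- The rank of a tree of finite sequences; `⊤ = ∞` if it is ill-founded. -/
noncomputable def treeRank (T : Set (List 𝒲)) : WithTop Ordinal :=
  if h : WellFounded (fun t s : T => s.val <+: t.val ∧ s.val ≠ t.val) then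
    ((⨆ s : T, Order.succ ((h.apply s).rank) : Ordinal) : WithTop Ordinal)
  else ⊤

open Classical in
/-- The embeddability index `Emb((x n), Y) = sup_{K ≥ 1} rank T((x n), Y, K)`. -/
noncomputable def embIndex (x : ℕ → 𝒲) (Y : Set 𝒲) : WithTop Ordinal :=
  if ∃ K : ℝ, 1 ≤ K ∧ treeRank (embTree x Y K) = ⊤ then ⊤
  else ((sSup {o : Ordinal | ∃ K : ℝ, 1 ≤ K ∧
      (o : WithTop Ordinal) = treeRank (embTree x Y K)} : Ordinal) : WithTop Ordinal)

/-- `(I m)` is a sequence of successive nonempty finite intervals `I 0 < I 1 < …` of `ℕ`. -/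
def IntervalSeq (I : ℕ → Finset ℕ) : Prop :=
  (∀ m, ∃ a b : ℕ, a ≤ b ∧ I m = Finset.Icc a b) ∧
  ∀ m, ∀ i ∈ I m, ∀ j ∈ I (m + 1), i < j

/-- The setting of Section 2 of the paper: a Banach space `𝒲` with a Schauder basis
`(e n)`, a countable subfield `𝔽 ⊆ ℝ` closed under the norms of finite `𝔽`-linear
combinations of the basis, and the countable `𝔽`-vector space `W` spanned by `(e n)`. -/
structure Frame (𝒲 : Type) [NormedAddCommGroup 𝒲] [NormedSpace ℝ 𝒲] : Type where
  e : ℕ → 𝒲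
  complete : CompleteSpace 𝒲
  basis : IsSchauderBasis e
  𝔽 : Subfield ℝ
  countable : (𝔽 : Set ℝ).Countable
  norm_mem : ∀ (s : Finset ℕ) (a : ℕ → ℝ), (∀ i ∈ s, a i ∈ 𝔽) →
    ‖∑ i ∈ s, a i • e i‖ ∈ 𝔽

namespace Frame

variable {𝒲 : Type} [NormedAddCommGroup 𝒲] [NormedSpace ℝ 𝒲] (ctx : Frame 𝒲)

/-- The `𝔽`-linear span of a set of vectors. -/
def fspan (S : Set 𝒲) : Set 𝒲 :=
  {v | ∃ t : Finset 𝒲, ↑t ⊆ S ∧ ∃ c : 𝒲 → ℝ, (∀ w, c w ∈ ctx.𝔽) ∧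
    v = ∑ w ∈ t, c w • w}

/-- The countable `𝔽`-vector space `W` with basis `(e n)`. -/
def W : Set 𝒲 := ctx.fspan (Set.range ctx.e)

/-- `(y n)` is a block sequence with respect to the reference block basis `(b n)`:
a sequence of nonzero vectors of the `𝔽`-span of `(b n)` with successive supports. -/
def BlockSeqRel (b y : ℕ → 𝒲) : Prop :=
  (∀ n, y n ∈ ctx.fspan (Set.range b)) ∧ (∀ n, y n ≠ 0) ∧
  ∃ D : ℕ → Finset ℕ, (∀ n, SuppIn b (y n) (D n)) ∧
    ∀ n, ∀ i ∈ D n, ∀ j ∈ D (n + 1), i < j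

/-- `(y n)` is a block sequence (with respect to the basis `(e n)` of `W`). -/
def IsBlockSeq (y : ℕ → 𝒲) : Prop := ctx.BlockSeqRel ctx.e y

/-- `Y` is a block subspace of `X`: the `𝔽`-span of an infinite block sequence of
vectors of `X`. -/
def IsBlockSubspaceOf (Y X : Set 𝒲) : Prop :=
  ∃ y : ℕ → 𝒲, ctx.IsBlockSeq y ∧ (∀ n, y n ∈ X) ∧ Y = ctx.fspan (Set.range y)

/-- `Y` is a block subspace of `W`. -/
def IsBlockSubspace (Y : Set 𝒲) : Prop := ctx.IsBlockSubspaceOf Y ctx.W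

/-- `F` is a finite-dimensional `𝔽`-subspace of `X`. -/
def IsFinDimIn (F X : Set 𝒲) : Prop :=
  ∃ t : Finset 𝒲, ↑t ⊆ X ∧ F = ctx.fspan ↑t

/-- `n < F`: every vector of `F` is supported on basis vectors of index `> n`. -/
def NatLt (n : ℕ) (F : Set 𝒲) : Prop :=
  ∀ x ∈ F, ∃ s : Finset ℕ, SuppIn ctx.e x s ∧ ∀ i ∈ s, n < i

/-- `V` is an `𝔽`-subspace of `𝒲`. -/
def IsSubspace (V : Set 𝒲) : Prop :=
  (0 : 𝒲) ∈ V ∧ (∀ u v : 𝒲, u ∈ V → v ∈ V → u + v ∈ V) ∧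
    ∀ c : ℝ, c ∈ ctx.𝔽 → ∀ v ∈ V, c • v ∈ V

/-- `V` is infinite-dimensional (not contained in a finitely generated subspace). -/
def IsInfDim (V : Set 𝒲) : Prop :=
  ¬∃ t : Finset 𝒲, V ⊆ ctx.fspan ↑t

/-- Game values of the asymptotic game `F^β_X`, for player II, computed by transfinite
recursion on the ordinal bound.  `IIWinsF X S β Facc vec` states: in the asymptotic game
below `X`, from a position where the vectors `vec` have been played and the
finite-dimensional subspaces played by II span `Facc`, and where I must now play a natural
number together with an ordinal `< β`, player II has a strategy so that the final outcome
lies in `S`. -/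
noncomputable def IIWinsF (X : Set 𝒲) (S : Set (List 𝒲)) :
    Ordinal → Set 𝒲 → List 𝒲 → Prop :=
  WellFounded.fix (C := fun _ : Ordinal => Set 𝒲 → List 𝒲 → Prop) Ordinal.lt_wf
    (fun β ih Facc vec =>
      ∀ n : ℕ, ∀ ξ : Ordinal, ∀ hξ : ξ < β,
        ∃ F : Set 𝒲, ctx.IsFinDimIn F X ∧ ctx.NatLt n F ∧
          ∃ x : 𝒲, x ≠ 0 ∧ x ∈ ctx.fspan (Facc ∪ F) ∧
            (ξ = 0 → vec ++ [x] ∈ S) ∧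
            (ξ ≠ 0 → ih ξ hξ (ctx.fspan (Facc ∪ F)) (vec ++ [x])))

/-- Player II has a strategy in the asymptotic game `F^β_X` to play an outcome in `S`. -/
noncomputable def IIStratF (X : Set 𝒲) (β : Ordinal) (S : Set (List 𝒲)) : Prop :=
  (β = 0 → ([] : List 𝒲) ∈ S) ∧ (β ≠ 0 → ctx.IIWinsF X S β (ctx.fspan ∅) [])

/-- Game values of the asymptotic game `F^β_X` for player I (who plays the integers and
the ordinals, trying to steer the outcome into `S`). -/
noncomputable def IWinsF (X : Set 𝒲) (S : Set (List 𝒲)) :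
    Ordinal → Set 𝒲 → List 𝒲 → Prop :=
  WellFounded.fix (C := fun _ : Ordinal => Set 𝒲 → List 𝒲 → Prop) Ordinal.lt_wf
    (fun β ih Facc vec =>
      ∃ n : ℕ, ∃ ξ : Ordinal, ∃ hξ : ξ < β,
        ∀ F : Set 𝒲, ctx.IsFinDimIn F X → ctx.NatLt n F →
        ∀ x : 𝒲, x ≠ 0 → x ∈ ctx.fspan (Facc ∪ F) →
          (ξ = 0 → vec ++ [x] ∈ S) ∧
          (ξ ≠ 0 → ih ξ hξ (ctx.fspan (Facc ∪ F)) (vec ++ [x])))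

/-- Player I has a strategy in the asymptotic game `F^β_X` to play an outcome in `S`. -/
noncomputable def IStratF (X : Set 𝒲) (β : Ordinal) (S : Set (List 𝒲)) : Prop :=
  (β = 0 → ([] : List 𝒲) ∈ S) ∧ (β ≠ 0 → ctx.IWinsF X S β (ctx.fspan ∅) [])

/-- Game values of the Gowers game `G^α_X` for player II. -/
noncomputable def IIWinsG (X : Set 𝒲) (S : Set (List 𝒲)) :
    Ordinal → Set 𝒲 → List 𝒲 → Prop :=
  WellFounded.fix (C := fun _ : Ordinal => Set 𝒲 → List 𝒲 → Prop) Ordinal.lt_wf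
    (fun α ih Facc vec =>
      ∀ Y : Set 𝒲, ctx.IsBlockSubspaceOf Y X →
      ∀ ξ : Ordinal, ∀ hξ : ξ < α,
        ∃ F : Set 𝒲, ctx.IsFinDimIn F Y ∧
          ∃ x : 𝒲, x ≠ 0 ∧ x ∈ ctx.fspan (Facc ∪ F) ∧
            (ξ = 0 → vec ++ [x] ∈ S) ∧
            (ξ ≠ 0 → ih ξ hξ (ctx.fspan (Facc ∪ F)) (vec ++ [x])))

/-- Player II has a strategy in the generalised Gowers game `G^α_X` to play in `S`. -/
noncomputable def IIStratG (X : Set 𝒲) (α : Ordinal) (S : Set (List 𝒲)) : Prop :=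
  (α = 0 → ([] : List 𝒲) ∈ S) ∧ (α ≠ 0 → ctx.IIWinsG X S α (ctx.fspan ∅) [])

/-- Game values of the adversarial game `A^α_X` for player II (who plays the integers,
the finite-dimensional subspaces `F_l ⊆ Y_l` and the vectors `y_l`). -/
noncomputable def IIWinsA (X : Set 𝒲) (S : Set (List 𝒲)) :
    Ordinal → Set 𝒲 → Set 𝒲 → List 𝒲 → Prop :=
  WellFounded.fix (C := fun _ : Ordinal => Set 𝒲 → Set 𝒲 → List 𝒲 → Prop)
    Ordinal.lt_wf
    (fun α ih Eacc Facc vec =>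
      ∃ n : ℕ,
        ∀ E : Set 𝒲, ctx.IsFinDimIn E X → ctx.NatLt n E →
        ∀ x : 𝒲, x ≠ 0 → x ∈ ctx.fspan (Eacc ∪ E) →
        ∀ Y : Set 𝒲, ctx.IsBlockSubspaceOf Y X →
        ∀ ξ : Ordinal, ∀ hξ : ξ < α,
          ∃ F : Set 𝒲, ctx.IsFinDimIn F Y ∧
            ∃ y : 𝒲, y ≠ 0 ∧ y ∈ ctx.fspan (Facc ∪ F) ∧
              (ξ = 0 → vec ++ [x, y] ∈ S) ∧
              (ξ ≠ 0 → ih ξ hξ (ctx.fspan (Eacc ∪ E)) (ctx.fspan (Facc ∪ F))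
                (vec ++ [x, y])))

/-- Player II has a strategy in the adversarial game `A^α_X` to play in `S`. -/
noncomputable def IIStratA (X : Set 𝒲) (α : Ordinal) (S : Set (List 𝒲)) : Prop :=
  (α = 0 → ([] : List 𝒲) ∈ S) ∧
  (α ≠ 0 → ctx.IIWinsA X S α (ctx.fspan ∅) (ctx.fspan ∅) [])

/-- Game values of the adversarial game `B^α_X` for player I (who plays the
finite-dimensional subspaces `E_l ⊆ Y_l`, the vectors `x_l`, the integers and the
ordinals). -/
noncomputable def IWinsB (X : Set 𝒲) (S : Set (List 𝒲)) :
    Ordinal → Set 𝒲 → Set 𝒲 → List 𝒲 → Prop :=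
  WellFounded.fix (C := fun _ : Ordinal => Set 𝒲 → Set 𝒲 → List 𝒲 → Prop)
    Ordinal.lt_wf
    (fun α ih Eacc Facc vec =>
      ∀ Y : Set 𝒲, ctx.IsBlockSubspaceOf Y X →
        ∃ E : Set 𝒲, ctx.IsFinDimIn E Y ∧
          ∃ x : 𝒲, x ≠ 0 ∧ x ∈ ctx.fspan (Eacc ∪ E) ∧
            ∃ n : ℕ, ∃ ξ : Ordinal, ∃ hξ : ξ < α,
              ∀ F : Set 𝒲, ctx.IsFinDimIn F X → ctx.NatLt n F →
              ∀ y : 𝒲, y ≠ 0 → y ∈ ctx.fspan (Facc ∪ F) →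
                (ξ = 0 → vec ++ [x, y] ∈ S) ∧
                (ξ ≠ 0 → ih ξ hξ (ctx.fspan (Eacc ∪ E)) (ctx.fspan (Facc ∪ F))
                  (vec ++ [x, y])))

/-- Player I has a strategy in the adversarial game `B^α_X` to play in `S`. -/
noncomputable def IStratB (X : Set 𝒲) (α : Ordinal) (S : Set (List 𝒲)) : Prop :=
  (α = 0 → ([] : List 𝒲) ∈ S) ∧
  (α ≠ 0 → ctx.IWinsB X S α (ctx.fspan ∅) (ctx.fspan ∅) [])

/-- Game values of the adversarial game `B^α_X` for player II (who plays the block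
subspaces `Y_l`, the finite-dimensional subspaces `F_l` and the vectors `y_l`). -/
noncomputable def IIWinsB (X : Set 𝒲) (S : Set (List 𝒲)) :
    Ordinal → Set 𝒲 → Set 𝒲 → List 𝒲 → Prop :=
  WellFounded.fix (C := fun _ : Ordinal => Set 𝒲 → Set 𝒲 → List 𝒲 → Prop)
    Ordinal.lt_wf
    (fun α ih Eacc Facc vec =>
      ∃ Y : Set 𝒲, ctx.IsBlockSubspaceOf Y X ∧
        ∀ E : Set 𝒲, ctx.IsFinDimIn E Y →
        ∀ x : 𝒲, x ≠ 0 → x ∈ ctx.fspan (Eacc ∪ E) →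
        ∀ n : ℕ, ∀ ξ : Ordinal, ∀ hξ : ξ < α,
          ∃ F : Set 𝒲, ctx.IsFinDimIn F X ∧ ctx.NatLt n F ∧
            ∃ y : 𝒲, y ≠ 0 ∧ y ∈ ctx.fspan (Facc ∪ F) ∧
              (ξ = 0 → vec ++ [x, y] ∈ S) ∧
              (ξ ≠ 0 → ih ξ hξ (ctx.fspan (Eacc ∪ E)) (ctx.fspan (Facc ∪ F))
                (vec ++ [x, y])))

/-- Player II has a strategy in the adversarial game `B^α_X` to play in `S`. -/
noncomputable def IIStratB (X : Set 𝒲) (α : Ordinal) (S : Set (List 𝒲)) : Prop :=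
  (α = 0 → ([] : List 𝒲) ∈ S) ∧
  (α ≠ 0 → ctx.IIWinsB X S α (ctx.fspan ∅) (ctx.fspan ∅) [])

end Frame

end Rosendal

namespace Rosendal

/-!
The block supports cut `ℕ` at some `n` so that finitely many of the `y i` are supported on `[0, n]`
and the others lie in `X` and are supported on `(n, ∞)`. By the modular law, a vector of `Y`
supported on `(n, ∞)` is then a combination of the latter `y i`, hence lies in `X`. So in the
asymptotic game I only has to raise the integers to at least `n`, and in the Gowers game
II answers a block subspace of `Y` as if one of its tails, a block subspace of `X`, had been played.
-/

section

variable {𝒲 : Type} [NormedAddCommGroup 𝒲] [NormedSpace ℝ 𝒲]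

theorem IsSchauderBasis.linearIndependent {e : ℕ → 𝒲} (he : IsSchauderBasis e) :
    LinearIndependent ℝ e := by
  refine linearIndependent_iff''.2 fun s a ha hsum => ?_
  have hasSum_zero : HasSum (fun i => a i • e i) 0 :=
    hsum ▸ hasSum_sum_of_ne_finset_zero fun i hi => by rw [ha i hi, zero_smul]
  exact congrFun ((he 0).unique hasSum_zero.tendsto_sum_nat (by simp))

theorem exists_suppIn_iff_mem_span {b : ℕ → 𝒲} {x : 𝒲} {A : Set ℕ} :
    (∃ s : Finset ℕ, SuppIn b x s ∧ ∀ i ∈ s, i ∈ A) ↔ x ∈ Submodule.span ℝ (b '' A) := by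
  constructor
  · rintro ⟨s, ⟨a, rfl⟩, hsA⟩
    exact Submodule.sum_smul_mem _ _ fun i hi =>
      Submodule.subset_span (Set.mem_image_of_mem b (hsA i hi))
  · rw [Finsupp.mem_span_image_iff_linearCombination]
    rintro ⟨a, haA, rfl⟩
    exact ⟨a.support, ⟨a, rfl⟩, fun i hi => haA hi⟩

namespace Frame

variable (ctx : Frame 𝒲)

theorem fspan_eq_coe_span (S : Set 𝒲) : ctx.fspan S = Submodule.span ctx.𝔽 S := by
  refine Set.Subset.antisymm ?_ fun v hv => ?_
  · rintro v ⟨t, ht, c, hc, rfl⟩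
    exact Submodule.sum_mem _ fun w hw =>
      Submodule.smul_mem _ (⟨c w, hc w⟩ : ctx.𝔽) (Submodule.subset_span (ht hw))
  · obtain ⟨c, hcS, rfl⟩ := Submodule.mem_span_set.1 hv
    exact ⟨c.support, hcS, fun w => (c w : ℝ), fun w => (c w).2, rfl⟩

/-- The vectors of `𝒲` supported on finitely many elements of `A`, with respect to the basis
`(e n)`. The coefficients are real, as in `SuppIn`, but the space is regarded as an `𝔽`-subspace
so that it can be intersected with block subspaces. -/
noncomputable def supported (A : Set ℕ) : Submodule ctx.𝔽 𝒲 :=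
  (Submodule.span ℝ (ctx.e '' A)).restrictScalars ctx.𝔽

variable {ctx}

theorem mem_supported {A : Set ℕ} {x : 𝒲} :
    x ∈ ctx.supported A ↔ ∃ s : Finset ℕ, SuppIn ctx.e x s ∧ ∀ i ∈ s, i ∈ A :=
  exists_suppIn_iff_mem_span.symm

theorem supported_mono : Monotone ctx.supported := fun _ _ hAB =>
  Submodule.span_mono (Set.image_mono hAB)

theorem disjoint_supported {A B : Set ℕ} (hAB : Disjoint A B) :
    Disjoint (ctx.supported A) (ctx.supported B) :=
  (Submodule.disjoint_restrictScalars_iff ctx.𝔽).2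
    (ctx.basis.linearIndependent.disjoint_span_image hAB)

theorem natLt_iff_subset_supported {n : ℕ} {F : Set 𝒲} :
    ctx.NatLt n F ↔ F ⊆ ctx.supported (Set.Ioi n) :=
  forall₂_congr fun _ _ => mem_supported.symm

theorem NatLt.anti {m n : ℕ} {F : Set 𝒲} (hF : ctx.NatLt n F) (hmn : m ≤ n) : ctx.NatLt m F :=
  natLt_iff_subset_supported.2 <|
    (natLt_iff_subset_supported.1 hF).trans (supported_mono (Set.Ioi_subset_Ioi hmn))

theorem IsFinDimIn.of_inter_subset {F X Y : Set 𝒲} (hF : ctx.IsFinDimIn F Y) (h : Y ∩ F ⊆ X) :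
    ctx.IsFinDimIn F X := by
  obtain ⟨t, htY, rfl⟩ := hF
  have ht : (t : Set 𝒲) ⊆ ctx.fspan t := by
    rw [fspan_eq_coe_span]
    exact Submodule.subset_span
  exact ⟨t, (Set.subset_inter htY ht).trans h, rfl⟩

theorem BlockSeqRel.shift {b y : ℕ → 𝒲} (hy : ctx.BlockSeqRel b y) (k : ℕ) :
    ctx.BlockSeqRel b fun i => y (i + k) := by
  obtain ⟨hmem, hne, D, hD, hlt⟩ := hy
  refine ⟨fun i => hmem _, fun i => hne _, fun i => D (i + k), fun i => hD _, fun i => ?_⟩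
  simpa only [Nat.add_right_comm] using hlt (i + k)

theorem IsBlockSeq.exists_strictMono_mem_supported {y : ℕ → 𝒲} (hy : ctx.IsBlockSeq y) :
    ∃ m : ℕ → ℕ, StrictMono m ∧ ∀ N,
      (∀ i ≤ N, y i ∈ ctx.supported (Set.Iic (m N))) ∧
      ∀ i > N, y i ∈ ctx.supported (Set.Ioi (m N)) := by
  obtain ⟨-, hne, D, hD, hlt⟩ := hy
  have hDne (i : ℕ) : (D i).Nonempty := by
    refine Finset.nonempty_iff_ne_empty.2 fun hempty => hne i ?_
    obtain ⟨a, ha⟩ := hD i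
    rw [ha, hempty, Finset.sum_empty]
  set m : ℕ → ℕ := fun i => (D i).max' (hDne i)
  have hm : StrictMono m := strictMono_nat_of_lt_succ fun i =>
    hlt i _ (Finset.max'_mem _ _) _ (Finset.max'_mem _ _)
  refine ⟨m, hm, fun N => ⟨fun i hi => ?_, fun i hi => ?_⟩⟩
  · exact mem_supported.2 ⟨D i, hD i, fun j hj =>
      ((D i).le_max' j hj).trans (hm.monotone hi)⟩
  · obtain ⟨i, rfl⟩ := Nat.exists_eq_add_one_of_ne_zero (Nat.ne_zero_of_lt hi)
    exact mem_supported.2 ⟨D (i + 1), hD (i + 1), fun j hj =>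
      (hm.monotone (Nat.le_of_lt_succ hi)).trans_lt (hlt i _ (Finset.max'_mem _ _) j hj)⟩

theorem IsBlockSeq.exists_forall_mem_supported_Ioi {y : ℕ → 𝒲} (hy : ctx.IsBlockSeq y) (n : ℕ) :
    ∃ k, ∀ i, y (i + k) ∈ ctx.supported (Set.Ioi n) := by
  obtain ⟨m, hm, hcut⟩ := hy.exists_strictMono_mem_supported
  exact ⟨n + 1, fun i =>
    supported_mono (Set.Ioi_subset_Ioi hm.le_apply) ((hcut n).2 (i + (n + 1)) (by omega))⟩

theorem IsBlockSeq.exists_fspan_inter_supported_subset {y : ℕ → 𝒲} (hy : ctx.IsBlockSeq y)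
    {X : Submodule ctx.𝔽 𝒲} (hyX : ∀ᶠ i in atTop, y i ∈ X) :
    ∃ n, ctx.fspan (Set.range y) ∩ ctx.supported (Set.Ioi n) ⊆ X := by
  obtain ⟨N, hN⟩ := eventually_atTop.1 hyX
  obtain ⟨m, -, hcut⟩ := hy.exists_strictMono_mem_supported
  obtain ⟨hhead, htail⟩ := hcut N
  refine ⟨m N, ?_⟩
  set head := Submodule.span ctx.𝔽 (y '' Set.Iic N)
  set tail := Submodule.span ctx.𝔽 (y '' Set.Ioi N)
  have head_le : head ≤ ctx.supported (Set.Iic (m N)) :=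
    Submodule.span_le.2 (Set.image_subset_iff.2 hhead)
  have tail_le : tail ≤ ctx.supported (Set.Ioi (m N)) :=
    Submodule.span_le.2 (Set.image_subset_iff.2 htail)
  have tail_le_X : tail ≤ X :=
    Submodule.span_le.2 (Set.image_subset_iff.2 fun i hi => hN i (le_of_lt hi))
  have head_disjoint : Disjoint head (ctx.supported (Set.Ioi (m N))) :=
    (disjoint_supported (Set.Iic_disjoint_Ioi le_rfl)).mono_left head_le
  have span_eq : Submodule.span ctx.𝔽 (Set.range y) = tail ⊔ head := by
    rw [← Submodule.span_union, ← Set.image_union, Set.union_comm, Set.Iic_union_Ioi,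
      Set.image_univ]
  rw [fspan_eq_coe_span, ← Submodule.coe_inf, SetLike.coe_subset_coe]
  calc Submodule.span ctx.𝔽 (Set.range y) ⊓ ctx.supported (Set.Ioi (m N))
      = tail ⊔ head ⊓ ctx.supported (Set.Ioi (m N)) := by
        rw [span_eq, sup_inf_assoc_of_le head tail_le]
    _ = tail := by rw [head_disjoint.eq_bot, sup_bot_eq]
    _ ≤ X := tail_le_X

theorem IsBlockSubspaceOf.exists_subset_isBlockSubspaceOf {X Y Z : Set 𝒲} {n : ℕ}
    (hZ : ctx.IsBlockSubspaceOf Z Y) (hYX : Y ∩ ctx.supported (Set.Ioi n) ⊆ X) :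
    ∃ Z' ⊆ Z, ctx.IsBlockSubspaceOf Z' X := by
  obtain ⟨z, hz, hzY, rfl⟩ := hZ
  obtain ⟨k, hk⟩ := hz.exists_forall_mem_supported_Ioi n
  refine ⟨ctx.fspan (Set.range fun i => z (i + k)), ?_,
    fun i => z (i + k), hz.shift k, fun i => hYX ⟨hzY _, hk i⟩, rfl⟩
  rw [fspan_eq_coe_span, fspan_eq_coe_span]
  exact Submodule.span_mono (Set.range_comp_subset_range (· + k) z)

theorem iiWinsG_iff {X : Set 𝒲} {S : Set (List 𝒲)} {α : Ordinal} {Facc : Set 𝒲} {vec : List 𝒲} :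
    ctx.IIWinsG X S α Facc vec ↔
      ∀ Y, ctx.IsBlockSubspaceOf Y X → ∀ ξ < α,
        ∃ F, ctx.IsFinDimIn F Y ∧ ∃ x, x ≠ 0 ∧ x ∈ ctx.fspan (Facc ∪ F) ∧
          (ξ = 0 → vec ++ [x] ∈ S) ∧
          (ξ ≠ 0 → ctx.IIWinsG X S ξ (ctx.fspan (Facc ∪ F)) (vec ++ [x])) := by
  rw [IIWinsG, WellFounded.fix_eq]

theorem iWinsF_iff {X : Set 𝒲} {S : Set (List 𝒲)} {α : Ordinal} {Facc : Set 𝒲} {vec : List 𝒲} :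
    ctx.IWinsF X S α Facc vec ↔
      ∃ n, ∃ ξ < α, ∀ F, ctx.IsFinDimIn F X → ctx.NatLt n F →
        ∀ x, x ≠ 0 → x ∈ ctx.fspan (Facc ∪ F) →
          (ξ = 0 → vec ++ [x] ∈ S) ∧
          (ξ ≠ 0 → ctx.IWinsF X S ξ (ctx.fspan (Facc ∪ F)) (vec ++ [x])) := by
  rw [IWinsF, WellFounded.fix_eq]
  simp only [exists_prop]

theorem IIWinsG.of_forall_exists_subset {X Y : Set 𝒲} {S : Set (List 𝒲)} {α : Ordinal}
    {Facc : Set 𝒲} {vec : List 𝒲} (hwin : ctx.IIWinsG X S α Facc vec)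
    (hYX : ∀ Z, ctx.IsBlockSubspaceOf Z Y → ∃ Z' ⊆ Z, ctx.IsBlockSubspaceOf Z' X) :
    ctx.IIWinsG Y S α Facc vec := by
  induction α using WellFoundedLT.induction generalizing Facc vec with
  | ind α ih =>
    refine iiWinsG_iff.2 fun Z hZ ξ hξ => ?_
    obtain ⟨Z', hZ'Z, hZ'⟩ := hYX Z hZ
    obtain ⟨F, hF, x, hx, hxF, hend, hcontinue⟩ := iiWinsG_iff.1 hwin Z' hZ' ξ hξ
    exact ⟨F, hF.of_inter_subset (Set.inter_subset_left.trans hZ'Z), x, hx, hxF, hend,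
      fun hξ0 => ih ξ hξ (hcontinue hξ0)⟩

theorem IWinsF.of_inter_supported_subset {X Y : Set 𝒲} {S : Set (List 𝒲)} {α : Ordinal}
    {Facc : Set 𝒲} {vec : List 𝒲} {n : ℕ} (hwin : ctx.IWinsF X S α Facc vec)
    (hYX : Y ∩ ctx.supported (Set.Ioi n) ⊆ X) : ctx.IWinsF Y S α Facc vec := by
  induction α using WellFoundedLT.induction generalizing Facc vec with
  | ind α ih =>
    obtain ⟨k, ξ, hξ, hplay⟩ := iWinsF_iff.1 hwin
    refine iWinsF_iff.2 ⟨max k n, ξ, hξ, fun F hFY hF x hx hxF => ?_⟩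
    have hF_supported : F ⊆ ctx.supported (Set.Ioi n) :=
      natLt_iff_subset_supported.1 (hF.anti (le_max_right k n))
    have hFX : ctx.IsFinDimIn F X :=
      hFY.of_inter_subset ((Set.inter_subset_inter_right Y hF_supported).trans hYX)
    obtain ⟨hend, hcontinue⟩ := hplay F hFX (hF.anti (le_max_left k n)) x hx hxF
    exact ⟨hend, fun hξ0 => ih ξ hξ (hcontinue hξ0)⟩

end Frame

theorem strategies_pass_to_almost_subspaces_general (ctx : Frame 𝒲) (T : Set (List 𝒲))
    (α : Ordinal) (X : Submodule ctx.𝔽 𝒲) (Y : Set 𝒲) (y : ℕ → 𝒲) (hy : ctx.IsBlockSeq y)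
    (hY : Y ⊆ ctx.fspan (Set.range y)) (hstar : ∀ᶠ n in atTop, y n ∈ X) :
    (ctx.IIStratG X α T → ctx.IIStratG Y α T) ∧ (ctx.IStratF X α T → ctx.IStratF Y α T) := by
  obtain ⟨n, hn⟩ := hy.exists_fspan_inter_supported_subset hstar
  have hYX : Y ∩ ctx.supported (Set.Ioi n) ⊆ X := (Set.inter_subset_inter_left _ hY).trans hn
  exact ⟨And.imp_right fun hwin hα => (hwin hα).of_forall_exists_subset fun _ hZ =>
      hZ.exists_subset_isBlockSubspaceOf hYX,
    And.imp_right fun hwin hα => (hwin hα).of_inter_supported_subset hYX⟩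

end

/-- Suppose `Y ⊆* X`, i.e. `Y` is spanned by a block sequence `(y n)`
all but finitely many of whose terms lie in `X`.  Then (1) if II has a strategy in the
Gowers game `G^α_X` to play in `T`, II also has one in `G^α_Y`; and (2) if I has a
strategy in the asymptotic game `F^α_X` to play in `T`, I also has one in `F^α_Y`. -/
theorem strategies_pass_to_almost_subspaces
    (𝒲 : Type) [NormedAddCommGroup 𝒲] [NormedSpace ℝ 𝒲] (ctx : Frame 𝒲)
    (T : Set (List 𝒲)) (α : Ordinal) (hα : α < (Cardinal.aleph 1).ord)
    (X Y : Set 𝒲) (hX : ctx.IsBlockSubspace X)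
    (y : ℕ → 𝒲) (hy : ctx.IsBlockSeq y) (hY : Y = ctx.fspan (Set.range y))
    (hstar : ∀ᶠ n in Filter.atTop, y n ∈ X) :
    (ctx.IIStratG X α T → ctx.IIStratG Y α T) ∧
    (ctx.IStratF X α T → ctx.IStratF Y α T) := by
  obtain ⟨x, -, -, rfl⟩ := hX
  rw [ctx.fspan_eq_coe_span] at hstar ⊢
  exact strategies_pass_to_almost_subspaces_general ctx T α _ Y y hy hY.subset hstar

end Rosendal
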